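/- arXiv:2307.14431 — 5 statements merged into one kernel-verified Lean document; each statement's English description precedes it below -/
import Mathlib

section
/- Let S be a ring (not necessarily unital) and let U be a set of local units for S. Then the corner uSu is a Baer ring for every u ∈ U if and only if S is locally Baer (i.e., the corner eSe is a Baer ring for every idempotent e ∈ S). -/
/-- The corner `eSe = {exe : x ∈ S}` of a ring. -/
def corner {S : Type*} [NonUnitalRing S] (e : S) : Set S :=
  Set.range fun y => e * y * e

/-- `U` is a set of local units for `S`: a set of idempotents such that every finite
subset of `S` admits a unit from `U`. -/
def IsLocalUnits {S : Type*} [NonUnitalRing S] (U : Set S) : Prop :=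
  (∀ u ∈ U, IsIdempotentElem u) ∧
    ∀ T : Finset S, ∃ u ∈ U, ∀ s ∈ T, u * s = s ∧ s * u = s

/-- The corner `eSe` (a unital ring with identity `e`) is a Baer ring: for every
subset `B` of `eSe`, the left annihilator of `B` in `eSe` equals `(eSe)f` for some
idempotent `f ∈ eSe`, and the right annihilator of `B` in `eSe` equals `g(eSe)` for
some idempotent `g ∈ eSe`. -/
def IsBaerCorner {S : Type*} [NonUnitalRing S] (e : S) : Prop :=
  ∀ B ⊆ corner e,
    (∃ f ∈ corner e, IsIdempotentElem f ∧
      {x | x ∈ corner e ∧ ∀ b ∈ B, x * b = 0} = {x | ∃ y ∈ corner e, x = y * f}) ∧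
    (∃ g ∈ corner e, IsIdempotentElem g ∧
      {x | x ∈ corner e ∧ ∀ b ∈ B, b * x = 0} = {x | ∃ y ∈ corner e, x = g * y})

theorem mem_corner_iff' {S : Type*} [NonUnitalRing S] {e : S} (he : e * e = e) (x : S) :
    x ∈ corner e ↔ e * x = x ∧ x * e = x := by
  constructor
  · rintro ⟨y, rfl⟩
    constructor
    · simp only [← mul_assoc, he]
    · simp only [mul_assoc, he]
  · rintro ⟨h1, h2⟩
    exact ⟨x, by simp only [h1, h2]⟩

theorem baer_descend {S : Type*} [NonUnitalRing S] {e u : S} (he : e * e = e) (hu : u * u = u)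
    (hue : u * e = e) (heu : e * u = e) (H : IsBaerCorner u) : IsBaerCorner e := by
  intro B hB
  have hB' : ∀ b ∈ B, e * b = b ∧ b * e = b := fun b hb => (mem_corner_iff' he b).1 (hB hb)
  have hsub : ∀ x, (e * x = x ∧ x * e = x) → u * x = x ∧ x * u = x := by
    rintro x ⟨h1, h2⟩
    constructor
    · rw [← h1, ← mul_assoc, hue]
    · rw [← h2, mul_assoc, heu]
  obtain ⟨⟨f, hf, hff, hfe⟩, ⟨g, hg, hgg, hge⟩⟩ :=
    H B (fun b hb => (mem_corner_iff' hu b).2 (hsub b (hB' b hb)))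
  have hff : f * f = f := hff
  have hgg : g * g = g := hgg
  have hf' := (mem_corner_iff' hu f).1 hf
  have hg' := (mem_corner_iff' hu g).1 hg
  have hfB : ∀ b ∈ B, f * b = 0 := by
    have : f ∈ {x | ∃ y ∈ corner u, x = y * f} := ⟨f, hf, hff.symm⟩
    rw [← hfe] at this
    exact this.2
  have hgB : ∀ b ∈ B, b * g = 0 := by
    have : g ∈ {x | ∃ y ∈ corner u, x = g * y} := ⟨g, hg, hgg.symm⟩
    rw [← hge] at this
    exact this.2
  have hF : ∀ x, (u * x = x ∧ x * u = x) → (∀ b ∈ B, x * b = 0) → x * f = x := by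
    intro x hx hxb
    have : x ∈ {x | x ∈ corner u ∧ ∀ b ∈ B, x * b = 0} := ⟨(mem_corner_iff' hu x).2 hx, hxb⟩
    rw [hfe] at this
    obtain ⟨y, -, rfl⟩ := this
    rw [mul_assoc, hff]
  have hG : ∀ x, (u * x = x ∧ x * u = x) → (∀ b ∈ B, b * x = 0) → g * x = x := by
    intro x hx hxb
    have : x ∈ {x | x ∈ corner u ∧ ∀ b ∈ B, b * x = 0} := ⟨(mem_corner_iff' hu x).2 hx, hxb⟩
    rw [hge] at this
    obtain ⟨y, -, rfl⟩ := this
    rw [← mul_assoc, hgg]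
  have hue' : u * (u - e) = u - e ∧ (u - e) * u = u - e := by
    constructor
    · rw [mul_sub, hu, hue]
    · rw [sub_mul, hu, heu]
  have h1 := hF (u - e) hue' (fun b hb => by
    rw [sub_mul, (hB' b hb).1, (hsub b (hB' b hb)).1, sub_self])
  have h2 := hG (u - e) hue' (fun b hb => by
    rw [mul_sub, (hB' b hb).2, (hsub b (hB' b hb)).2, sub_self])
  have h3 : e * (f * e) = f * e := by
    have := congrArg (· * e) h1
    simp only [sub_mul, hue, he, hf'.1, sub_self, mul_assoc] at this
    exact (sub_eq_zero.1 this).symm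
  have h4 : e * g * e = e * g := by
    have := congrArg (e * ·) h2
    simp only [mul_sub, heu, he, hg'.2, sub_self, ← mul_assoc] at this
    exact (sub_eq_zero.1 this).symm
  refine ⟨⟨f * e, (mem_corner_iff' he _).2 ⟨h3, by rw [mul_assoc, he]⟩, ?_, ?_⟩,
    ⟨e * g, (mem_corner_iff' he _).2 ⟨by rw [← mul_assoc, he], h4⟩, ?_, ?_⟩⟩
  · change f * e * (f * e) = f * e
    rw [mul_assoc, h3, ← mul_assoc, hff]
  · ext x
    constructor
    · rintro ⟨hx, hxb⟩
      have hx' := (mem_corner_iff' he x).1 hx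
      exact ⟨x, hx, by rw [← mul_assoc, hF x (hsub x hx') hxb, hx'.2]⟩
    · rintro ⟨y, hy, rfl⟩
      have hy' := (mem_corner_iff' he y).1 hy
      refine ⟨(mem_corner_iff' he _).2 ⟨by rw [← mul_assoc, hy'.1], by
        rw [mul_assoc, mul_assoc, he]⟩, fun b hb => ?_⟩
      rw [mul_assoc, mul_assoc, (hB' b hb).1, hfB b hb, mul_zero]
  · change e * g * (e * g) = e * g
    rw [← mul_assoc, h4, mul_assoc, hgg]
  · ext x
    constructor
    · rintro ⟨hx, hxb⟩
      have hx' := (mem_corner_iff' he x).1 hx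
      exact ⟨x, hx, by rw [mul_assoc, hG x (hsub x hx') hxb, hx'.1]⟩
    · rintro ⟨y, hy, rfl⟩
      have hy' := (mem_corner_iff' he y).1 hy
      refine ⟨(mem_corner_iff' he _).2 ⟨by rw [← mul_assoc, ← mul_assoc, he], by
        rw [mul_assoc, hy'.2]⟩, fun b hb => ?_⟩
      rw [← mul_assoc, ← mul_assoc, (hB' b hb).2, hgB b hb, zero_mul]

/-- If `U` is a set of local units for `S`, then `uSu` is a Baer ring for every
`u ∈ U` iff `S` is locally Baer, i.e. `eSe` is a Baer ring for every idempotent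
`e ∈ S`. -/
theorem stmt_1 {S : Type*} [NonUnitalRing S] (U : Set S) (hU : IsLocalUnits U) :
    (∀ u ∈ U, IsBaerCorner u) ↔ ∀ e : S, IsIdempotentElem e → IsBaerCorner e := by
  constructor
  · intro H e he
    obtain ⟨u, huU, hu⟩ := hU.2 {e}
    have := hu e (Finset.mem_singleton_self e)
    exact baer_descend he (hU.1 u huU) this.1 this.2 (H u huU)
  · intro H u hu
    exact H u (hU.1 u hu)
end

section
/- Let S be a ring (not necessarily unital) and let U be a set of local units for S. Then the corner uSu is a Rickart ring for every u ∈ U if and only if S is locally Rickart (i.e., the corner eSe is a Rickart ring for every idempotent e ∈ S). -/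
/-- The corner `eSe` (a unital ring with identity `e`) is a Rickart ring: for every
`x ∈ eSe`, the left annihilator of `x` in `eSe` equals `(eSe)f` for some idempotent
`f ∈ eSe`, and the right annihilator of `x` in `eSe` equals `g(eSe)` for some
idempotent `g ∈ eSe`. -/
def IsRickartCorner {S : Type*} [NonUnitalRing S] (e : S) : Prop :=
  ∀ x ∈ corner e,
    (∃ f ∈ corner e, IsIdempotentElem f ∧
      {y | y ∈ corner e ∧ y * x = 0} = {y | ∃ z ∈ corner e, y = z * f}) ∧
    (∃ g ∈ corner e, IsIdempotentElem g ∧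
      {y | y ∈ corner e ∧ x * y = 0} = {y | ∃ z ∈ corner e, y = g * z})

theorem mem_corner_iff_aux {S : Type*} [NonUnitalRing S] {e : S} (he : IsIdempotentElem e)
    (y : S) : y ∈ corner e ↔ e * y = y ∧ y * e = y := by
  have he' : e * e = e := he
  constructor
  · rintro ⟨z, rfl⟩
    constructor
    · show e * (e * z * e) = e * z * e
      rw [← mul_assoc, ← mul_assoc, he']
    · show e * z * e * e = e * z * e
      rw [mul_assoc (e * z), he']
  · rintro ⟨h1, h2⟩
    exact ⟨y, by show e * y * e = y; rw [h1, h2]⟩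

theorem rickart_corner_aux {S : Type*} [NonUnitalRing S] {e u : S}
    (he : IsIdempotentElem e) (hu : IsIdempotentElem u) (hue : u * e = e) (heu : e * u = e)
    (hR : IsRickartCorner u) : IsRickartCorner e := by
  have he' : e * e = e := he
  have hu' : u * u = u := hu
  have hsub : ∀ y, e * y = y ∧ y * e = y → u * y = y ∧ y * u = y := by
    rintro y ⟨h1, h2⟩
    constructor
    · rw [← h1, ← mul_assoc, hue]
    · rw [← h2, mul_assoc, heu]
  have huemem : u * (u - e) = u - e ∧ (u - e) * u = u - e := by
    rw [mul_sub, sub_mul, hu', hue, heu]; simp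
  intro x hx
  rw [mem_corner_iff_aux he] at hx
  obtain ⟨⟨f, hf, hff, hF⟩, ⟨g, hg, hgg, hG⟩⟩ := hR x ((mem_corner_iff_aux hu x).2 (hsub x hx))
  rw [mem_corner_iff_aux hu] at hf hg
  have hff' : f * f = f := hff
  have hgg' : g * g = g := hgg
  have hF' : ∀ y, u * y = y ∧ y * u = y → y * x = 0 → y * f = y := by
    intro y hy hyx
    have : y ∈ {y | y ∈ corner u ∧ y * x = 0} := ⟨(mem_corner_iff_aux hu y).2 hy, hyx⟩
    rw [hF] at this
    obtain ⟨z, -, rfl⟩ := this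
    rw [mul_assoc, hff']
  have hG' : ∀ y, u * y = y ∧ y * u = y → x * y = 0 → g * y = y := by
    intro y hy hyx
    have : y ∈ {y | y ∈ corner u ∧ x * y = 0} := ⟨(mem_corner_iff_aux hu y).2 hy, hyx⟩
    rw [hG] at this
    obtain ⟨z, -, rfl⟩ := this
    rw [← mul_assoc, hgg']
  have hfx : f * x = 0 := by
    have : f ∈ {y | ∃ z ∈ corner u, y = z * f} :=
      ⟨f, (mem_corner_iff_aux hu f).2 hf, hff'.symm⟩
    rw [← hF] at this
    exact this.2
  have hxg : x * g = 0 := by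
    have : g ∈ {y | ∃ z ∈ corner u, y = g * z} :=
      ⟨g, (mem_corner_iff_aux hu g).2 hg, hgg'.symm⟩
    rw [← hG] at this
    exact this.2
  have hux := hsub x hx
  have hfe : e * (f * e) = f * e := by
    have h := hF' (u - e) huemem (by rw [sub_mul, hux.1, hx.1, sub_self])
    have h2 : (u - e) * f * e = 0 := by rw [h, sub_mul, hue, he', sub_self]
    rw [sub_mul, hf.1, sub_mul, mul_assoc e] at h2
    exact (sub_eq_zero.1 h2).symm
  have hge : e * g * e = e * g := by
    have h := hG' (u - e) huemem (by rw [mul_sub, hux.2, hx.2, sub_self])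
    have h2 : e * (g * (u - e)) = 0 := by rw [h, mul_sub, heu, he', sub_self]
    rw [mul_sub, hg.2, mul_sub, ← mul_assoc e] at h2
    exact (sub_eq_zero.1 h2).symm
  have hfe2 : f * e * e = f * e := by rw [mul_assoc, he']
  have hge2 : e * (e * g) = e * g := by rw [← mul_assoc, he']
  refine ⟨⟨f * e, (mem_corner_iff_aux he _).2 ⟨hfe, hfe2⟩, ?_, ?_⟩,
    ⟨e * g, (mem_corner_iff_aux he _).2 ⟨hge2, hge⟩, ?_, ?_⟩⟩
  · show f * e * (f * e) = f * e
    rw [mul_assoc f, hfe, ← mul_assoc, hff']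
  · ext y
    constructor
    · rintro ⟨hy, hyx⟩
      have hy' := (mem_corner_iff_aux he y).1 hy
      refine ⟨y, hy, ?_⟩
      rw [← mul_assoc, hF' y (hsub y hy') hyx, hy'.2]
    · rintro ⟨z, hz, rfl⟩
      have hz' := (mem_corner_iff_aux he z).1 hz
      refine ⟨(mem_corner_iff_aux he _).2 ⟨?_, ?_⟩, ?_⟩
      · rw [← mul_assoc, hz'.1]
      · rw [mul_assoc, hfe2]
      · rw [mul_assoc, mul_assoc f, hx.1, hfx, mul_zero]
  · show e * g * (e * g) = e * g
    rw [← mul_assoc, hge, mul_assoc, hgg']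
  · ext y
    constructor
    · rintro ⟨hy, hyx⟩
      have hy' := (mem_corner_iff_aux he y).1 hy
      refine ⟨y, hy, ?_⟩
      rw [mul_assoc, hG' y (hsub y hy') hyx, hy'.1]
    · rintro ⟨z, hz, rfl⟩
      have hz' := (mem_corner_iff_aux he z).1 hz
      refine ⟨(mem_corner_iff_aux he _).2 ⟨?_, ?_⟩, ?_⟩
      · rw [← mul_assoc, hge2]
      · rw [mul_assoc, hz'.2]
      · rw [← mul_assoc, ← mul_assoc, hx.2, hxg, zero_mul]

/-- If `U` is a set of local units for `S`, then `uSu` is a Rickart ring for every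
`u ∈ U` iff `S` is locally Rickart, i.e. `eSe` is a Rickart ring for every
idempotent `e ∈ S`. -/
theorem stmt_2 {S : Type*} [NonUnitalRing S] (U : Set S) (hU : IsLocalUnits U) :
    (∀ u ∈ U, IsRickartCorner u) ↔ ∀ e : S, IsIdempotentElem e → IsRickartCorner e := by
  constructor
  · intro h e he
    obtain ⟨u, hu, hs⟩ := hU.2 {e}
    obtain ⟨h1, h2⟩ := hs e (Finset.mem_singleton_self e)
    exact rickart_corner_aux he (hU.1 u hu) h1 h2 (h u hu)
  · intro h u hu
    exact h u (hU.1 u hu)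
end

section
/- Let n ∈ ℕ and let S₁, …, Sₙ be rings (not necessarily unital). The direct product S = Π_{i=1}^n S_i is locally Baer if and only if each S_i is locally Baer. -/
/-- A ring is locally Baer if the corner `eSe` is a Baer ring for every idempotent
`e ∈ S`. -/
def IsLocallyBaer (S : Type*) [NonUnitalRing S] : Prop :=
  ∀ e : S, IsIdempotentElem e → IsBaerCorner e

theorem mem_corner_pi_iff {ι : Type*} {S : ι → Type*} [∀ i, NonUnitalRing (S i)]
    (e x : ∀ i, S i) : x ∈ corner e ↔ ∀ i, x i ∈ corner (e i) := by
  constructor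
  · rintro ⟨y, rfl⟩ i
    exact ⟨y i, rfl⟩
  · intro h
    choose y hy using h
    exact ⟨y, funext hy⟩

theorem single_mem_corner {ι : Type*} [DecidableEq ι] {S : ι → Type*}
    [∀ i, NonUnitalRing (S i)] (i : ι) (e x : S i) (h : x ∈ corner e) :
    (Pi.single i x : ∀ i, S i) ∈ corner (Pi.single i e : ∀ i, S i) := by
  obtain ⟨y, rfl⟩ := h
  exact ⟨Pi.single i y, by simp only [Pi.single_mul]⟩

/-- A finite direct product of rings is locally Baer iff each factor is. -/
theorem stmt_8 (n : ℕ) (S : Fin n → Type*) [∀ i, NonUnitalRing (S i)] :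
    IsLocallyBaer (∀ i, S i) ↔ ∀ i, IsLocallyBaer (S i) := by
  constructor
  · intro h i e he B hB
    have hE : IsIdempotentElem (Pi.single i e : ∀ i, S i) := by
      unfold IsIdempotentElem
      rw [← Pi.single_mul, he.eq]
    have hmem : ∀ x : ∀ i, S i, x ∈ corner (Pi.single i e : ∀ i, S i) → x i ∈ corner e := by
      intro x hx
      have := (mem_corner_pi_iff _ _).1 hx i
      rwa [Pi.single_eq_same] at this
    obtain ⟨⟨f, hf, hff, hfe⟩, ⟨g, hg, hgg, hge⟩⟩ := h _ hE
      ((fun b => (Pi.single i b : ∀ i, S i)) '' B) (by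
        rintro _ ⟨b, hb, rfl⟩
        exact single_mem_corner i e b (hB hb))
    refine ⟨⟨f i, hmem f hf, congrFun hff i, ?_⟩, ⟨g i, hmem g hg, congrFun hgg i, ?_⟩⟩
    · ext x
      constructor
      · rintro ⟨hx, hxb⟩
        obtain ⟨y, hy, hxy⟩ := (Set.ext_iff.1 hfe (Pi.single i x)).1 ⟨single_mem_corner i e x hx, by
          rintro _ ⟨b, hb, rfl⟩
          simp only [← Pi.single_mul, hxb b hb, Pi.single_zero]⟩
        refine ⟨y i, hmem y hy, ?_⟩
        have := congrFun hxy i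
        rwa [Pi.single_eq_same] at this
      · rintro ⟨y, hy, rfl⟩
        obtain ⟨h1, h2⟩ := (Set.ext_iff.1 hfe (Pi.single i y * f)).2
          ⟨_, single_mem_corner i e y hy, rfl⟩
        refine ⟨by simpa using hmem _ h1, fun b hb => ?_⟩
        simpa using congrFun (h2 _ ⟨b, hb, rfl⟩) i
    · ext x
      constructor
      · rintro ⟨hx, hxb⟩
        obtain ⟨y, hy, hxy⟩ := (Set.ext_iff.1 hge (Pi.single i x)).1 ⟨single_mem_corner i e x hx, by
          rintro _ ⟨b, hb, rfl⟩
          simp only [← Pi.single_mul, hxb b hb, Pi.single_zero]⟩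
        refine ⟨y i, hmem y hy, ?_⟩
        have := congrFun hxy i
        rwa [Pi.single_eq_same] at this
      · rintro ⟨y, hy, rfl⟩
        obtain ⟨h1, h2⟩ := (Set.ext_iff.1 hge (g * Pi.single i y)).2
          ⟨_, single_mem_corner i e y hy, rfl⟩
        refine ⟨by simpa using hmem _ h1, fun b hb => ?_⟩
        simpa using congrFun (h2 _ ⟨b, hb, rfl⟩) i
  · intro h e he B hB
    have key := fun i => h i (e i) (congrFun he i) ((fun b => b i) '' B) (by
      rintro _ ⟨b, hb, rfl⟩
      exact (mem_corner_pi_iff _ _).1 (hB hb) i)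
    choose hl hr using key
    choose f hf hff hfe using hl
    choose g hg hgg hge using hr
    refine ⟨⟨f, (mem_corner_pi_iff _ _).2 hf, funext hff, ?_⟩,
      ⟨g, (mem_corner_pi_iff _ _).2 hg, funext hgg, ?_⟩⟩
    · ext x
      constructor
      · rintro ⟨hx, hxb⟩
        have := fun i => (Set.ext_iff.1 (hfe i) (x i)).1 ⟨(mem_corner_pi_iff _ _).1 hx i, by
          rintro _ ⟨b, hb, rfl⟩
          exact congrFun (hxb b hb) i⟩
        choose y hy hxy using this
        exact ⟨y, (mem_corner_pi_iff _ _).2 hy, funext hxy⟩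
      · rintro ⟨y, hy, rfl⟩
        have := fun i => (Set.ext_iff.1 (hfe i) (y i * f i)).2
          ⟨y i, (mem_corner_pi_iff _ _).1 hy i, rfl⟩
        exact ⟨(mem_corner_pi_iff _ _).2 fun i => (this i).1,
          fun b hb => funext fun i => (this i).2 _ ⟨b, hb, rfl⟩⟩
    · ext x
      constructor
      · rintro ⟨hx, hxb⟩
        have := fun i => (Set.ext_iff.1 (hge i) (x i)).1 ⟨(mem_corner_pi_iff _ _).1 hx i, by
          rintro _ ⟨b, hb, rfl⟩
          exact congrFun (hxb b hb) i⟩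
        choose y hy hxy using this
        exact ⟨y, (mem_corner_pi_iff _ _).2 hy, funext hxy⟩
      · rintro ⟨y, hy, rfl⟩
        have := fun i => (Set.ext_iff.1 (hge i) (g i * y i)).2
          ⟨y i, (mem_corner_pi_iff _ _).1 hy i, rfl⟩
        exact ⟨(mem_corner_pi_iff _ _).2 fun i => (this i).1,
          fun b hb => funext fun i => (this i).2 _ ⟨b, hb, rfl⟩⟩
end

section
/- Let n ∈ ℕ and let S₁, …, Sₙ be rings (not necessarily unital). The direct product S = Π_{i=1}^n S_i is locally Rickart if and only if each S_i is locally Rickart. -/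
/-- A ring is locally Rickart if the corner `eSe` is a Rickart ring for every
idempotent `e ∈ S`. -/
def IsLocallyRickart (S : Type*) [NonUnitalRing S] : Prop :=
  ∀ e : S, IsIdempotentElem e → IsRickartCorner e

theorem mem_corner_pi {ι : Type*} {S : ι → Type*} [∀ i, NonUnitalRing (S i)] (e y : ∀ i, S i) :
    y ∈ corner e ↔ ∀ i, y i ∈ corner (e i) := by
  constructor
  · rintro ⟨z, rfl⟩ i
    exact ⟨z i, rfl⟩
  · intro h
    choose z hz using h
    exact ⟨z, funext hz⟩

theorem mem_corner_single {ι : Type*} [DecidableEq ι] {S : ι → Type*} [∀ i, NonUnitalRing (S i)]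
    (i : ι) {e y : S i} (h : y ∈ corner e) :
    (Pi.single i y : ∀ i, S i) ∈ corner (Pi.single i e : ∀ i, S i) := by
  obtain ⟨z, rfl⟩ := h
  refine ⟨Pi.single i z, ?_⟩
  funext j
  by_cases hj : j = i
  · subst hj; simp
  · simp [hj]

theorem single_mul_single_zero {ι : Type*} [DecidableEq ι] {S : ι → Type*}
    [∀ i, NonUnitalRing (S i)] (i : ι) {x y : S i} (h : x * y = 0) :
    (Pi.single i x : ∀ i, S i) * Pi.single i y = 0 := by
  funext j
  by_cases hj : j = i
  · subst hj; simpa using h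
  · simp [hj]

/-- A finite direct product of rings is locally Rickart iff each factor is. -/
theorem stmt_9 (n : ℕ) (S : Fin n → Type*) [∀ i, NonUnitalRing (S i)] :
    IsLocallyRickart (∀ i, S i) ↔ ∀ i, IsLocallyRickart (S i) := by
  constructor
  · intro H i e he x hx
    have hE : IsIdempotentElem (Pi.single i e : ∀ i, S i) := by
      funext j
      by_cases hj : j = i
      · subst hj; simpa using he.eq
      · simp [hj]
    have down : ∀ y : ∀ i, S i, y ∈ corner (Pi.single i e : ∀ i, S i) → y i ∈ corner e := by
      intro y hy
      simpa using (mem_corner_pi _ _).1 hy i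
    obtain ⟨⟨f, hf, hff, hF⟩, ⟨g, hg, hgg, hG⟩⟩ := H _ hE _ (mem_corner_single i hx)
    refine ⟨⟨f i, down f hf, congrFun hff i, ?_⟩, ⟨g i, down g hg, congrFun hgg i, ?_⟩⟩
    · ext y
      constructor
      · rintro ⟨hy, hyx⟩
        obtain ⟨z, hz, h⟩ := hF.subset ⟨mem_corner_single i hy, single_mul_single_zero i hyx⟩
        exact ⟨z i, down z hz, by simpa using congrFun h i⟩
      · rintro ⟨z, hz, rfl⟩
        obtain ⟨h1, h2⟩ := hF.superset ⟨_, mem_corner_single i hz, rfl⟩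
        exact ⟨by simpa using down _ h1, by simpa using congrFun h2 i⟩
    · ext y
      constructor
      · rintro ⟨hy, hyx⟩
        obtain ⟨z, hz, h⟩ := hG.subset ⟨mem_corner_single i hy, single_mul_single_zero i hyx⟩
        exact ⟨z i, down z hz, by simpa using congrFun h i⟩
      · rintro ⟨z, hz, rfl⟩
        obtain ⟨h1, h2⟩ := hG.superset ⟨_, mem_corner_single i hz, rfl⟩
        exact ⟨by simpa using down _ h1, by simpa using congrFun h2 i⟩
  · intro H e he x hx
    have K := fun i => H i (e i) (congrFun he i) (x i) ((mem_corner_pi _ _).1 hx i)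
    choose f hf hff hF using fun i => (K i).1
    choose g hg hgg hG using fun i => (K i).2
    refine ⟨⟨f, (mem_corner_pi _ _).2 hf, funext hff, ?_⟩,
      ⟨g, (mem_corner_pi _ _).2 hg, funext hgg, ?_⟩⟩
    · ext y
      constructor
      · rintro ⟨hy, hyx⟩
        choose z hz h using fun i =>
          (hF i).subset ⟨(mem_corner_pi _ _).1 hy i, congrFun hyx i⟩
        exact ⟨z, (mem_corner_pi _ _).2 hz, funext h⟩
      · rintro ⟨z, hz, rfl⟩
        have h := fun i => (hF i).superset ⟨z i, (mem_corner_pi _ _).1 hz i, rfl⟩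
        exact ⟨(mem_corner_pi _ _).2 fun i => (h i).1, funext fun i => (h i).2⟩
    · ext y
      constructor
      · rintro ⟨hy, hyx⟩
        choose z hz h using fun i =>
          (hG i).subset ⟨(mem_corner_pi _ _).1 hy i, congrFun hyx i⟩
        exact ⟨z, (mem_corner_pi _ _).2 hz, funext h⟩
      · rintro ⟨z, hz, rfl⟩
        have h := fun i => (hG i).superset ⟨z i, (mem_corner_pi _ _).1 hz i, rfl⟩
        exact ⟨(mem_corner_pi _ _).2 fun i => (h i).1, funext fun i => (h i).2⟩
end

section
/- Let V be a countable set and let 𝒜 be a collection of subsets of V that is closed under finite unions, finite intersections, and relative complements. Let n ∈ ℕ, let X₁, …, Xₙ ∈ 𝒜, let S ⊆ V, and let A ∈ 𝒜 be such that A ∩ S and A \ S are infinite and A ∩ S ∉ 𝒜. Then there exist elements s ∈ A ∩ S and t ∈ A \ S such that for every i ∈ {1, …, n}, s ∈ X_i if and only if t ∈ X_i. -/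
theorem stmt_16_aux {V : Type*} (𝒜 : Set (Set V))
    (hunion : ∀ A ∈ 𝒜, ∀ B ∈ 𝒜, A ∪ B ∈ 𝒜)
    (hinter : ∀ A ∈ 𝒜, ∀ B ∈ 𝒜, A ∩ B ∈ 𝒜)
    (hdiff : ∀ A ∈ 𝒜, ∀ B ∈ 𝒜, A \ B ∈ 𝒜) (S : Set V)
    (n : ℕ) : ∀ (X : Fin n → Set V) (_ : ∀ i, X i ∈ 𝒜) (A : Set V) (_ : A ∈ 𝒜)
    (_ : A ∩ S ∉ 𝒜), ∃ s ∈ A ∩ S, ∃ t ∈ A \ S, ∀ i, s ∈ X i ↔ t ∈ X i := by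
  induction n with
  | zero =>
    intro X hX A hA hnot
    have h1 : (A ∩ S).Nonempty := by
      by_contra h
      rw [Set.not_nonempty_iff_eq_empty] at h
      apply hnot
      rw [h, ← Set.diff_self (s := A)]
      exact hdiff A hA A hA
    have h2 : (A \ S).Nonempty := by
      by_contra h
      rw [Set.not_nonempty_iff_eq_empty, Set.diff_eq_empty] at h
      apply hnot
      rwa [Set.inter_eq_left.2 h]
    obtain ⟨s, hs⟩ := h1
    obtain ⟨t, ht⟩ := h2
    exact ⟨s, hs, t, ht, fun i => i.elim0⟩
  | succ n ih =>
    intro X hX A hA hnot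
    by_cases h : (A ∩ X 0) ∩ S ∈ 𝒜
    · have h' : (A \ X 0) ∩ S ∉ 𝒜 := by
        intro h'
        apply hnot
        have e : A ∩ S = ((A ∩ X 0) ∩ S) ∪ ((A \ X 0) ∩ S) := by
          rw [← Set.union_inter_distrib_right, Set.inter_union_diff]
        rw [e]
        exact hunion _ h _ h'
      obtain ⟨s, hs, t, ht, hst⟩ := ih (fun i => X i.succ) (fun i => hX _) _
        (hdiff A hA _ (hX 0)) h'
      refine ⟨s, ⟨hs.1.1, hs.2⟩, t, ⟨ht.1.1, ht.2⟩, fun i => ?_⟩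
      refine Fin.cases ?_ hst i
      exact iff_of_false hs.1.2 ht.1.2
    · obtain ⟨s, hs, t, ht, hst⟩ := ih (fun i => X i.succ) (fun i => hX _) _
        (hinter A hA _ (hX 0)) h
      refine ⟨s, ⟨hs.1.1, hs.2⟩, t, ⟨ht.1.1, ht.2⟩, fun i => ?_⟩
      refine Fin.cases ?_ hst i
      exact iff_of_true hs.1.2 ht.1.2

/-- Lemma 6.1 (indistinguishability): let `V` be a countable vertex set and `𝒜` a
collection of subsets of `V` closed under finite unions, finite intersections and
relative complements. Given `X₁, …, Xₙ ∈ 𝒜`, a set `S ⊆ V`, and `A ∈ 𝒜` with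
`A ∩ S` and `A \ S` infinite and `A ∩ S ∉ 𝒜`, there are `s ∈ A ∩ S` and
`t ∈ A \ S` lying in exactly the same sets `X i`. -/
theorem stmt_16 {V : Type*} [Countable V] (𝒜 : Set (Set V))
    (hunion : ∀ A ∈ 𝒜, ∀ B ∈ 𝒜, A ∪ B ∈ 𝒜)
    (hinter : ∀ A ∈ 𝒜, ∀ B ∈ 𝒜, A ∩ B ∈ 𝒜)
    (hdiff : ∀ A ∈ 𝒜, ∀ B ∈ 𝒜, A \ B ∈ 𝒜)
    (n : ℕ) (X : Fin n → Set V) (hX : ∀ i, X i ∈ 𝒜)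
    (S : Set V) (A : Set V) (hA : A ∈ 𝒜)
    (hAS : (A ∩ S).Infinite) (hAS' : (A \ S).Infinite)
    (hnot : A ∩ S ∉ 𝒜) :
    ∃ s ∈ A ∩ S, ∃ t ∈ A \ S, ∀ i, s ∈ X i ↔ t ∈ X i := by
  exact stmt_16_aux 𝒜 hunion hinter hdiff S n X hX A hA hnot
end
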